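/- Let n ≥ 0 and let κ = (κ_1,…,κ_ℓ) ∈ Z^ℓ satisfy κ_l − κ_{l+1} > n for 1 ≤ l < ℓ, and let λ be an ℓ-multipartition of n. Then in the polynomial ring Z[t] the following identity holds: [λ]!_t · ∏_{1≤l<m≤ℓ} ∏_{(l,r,c)∈[λ]} [κ_l − r + c − κ_m]_t = ∏_{e≥2} Φ_e(t)^{deg_e(t^λ)}, where the product on the right is over all integers e ≥ 2, Φ_e(t) is the e-th cyclotomic polynomial, and deg_e(t^λ) = 0 for all but finitely many e. (This identifies the seminormal coefficient γ_{t^λ} attached to the Murphy basis as a product of cyclotomic polynomials.) -/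

import Mathlib

open scoped BigOperators
open scoped Classical

namespace Paper

/-! ## Quantum integers -/

/-- The quantum integer `[d]_x` in a field, for `d ∈ ℤ`. -/
noncomputable def qint {K : Type*} [Field K] (x : K) (d : ℤ) : K :=
  if 0 ≤ d then ∑ k ∈ Finset.range d.toNat, x ^ k
  else -∑ k ∈ Finset.range (-d).toNat, x ^ (-((k : ℤ) + 1))

/-- The quantum integer `[d]_t` in a commutative ring, for an invertible `t` and `d ∈ ℤ`. -/
def qintU {O : Type*} [CommRing O] (t : Oˣ) (d : ℤ) : O :=
  if 0 ≤ d then ∑ k ∈ Finset.range d.toNat, (t : O) ^ k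
  else -∑ k ∈ Finset.range (-d).toNat, ((t ^ (-((k : ℤ) + 1)) : Oˣ) : O)

/-! ## Nodes, multipartitions and standard tableaux -/

/-- A node `(l, r, c)`: component `l`, row `r`, column `c` (all `0`-based). -/
abbrev Node : Type := ℕ × ℕ × ℕ

/-- `nodeBelow A B` holds when `B` is strictly below `A`, i.e. `A < B` lexicographically. -/
def nodeBelow (A B : Node) : Prop :=
  A.1 < B.1 ∨ (A.1 = B.1 ∧ (A.2.1 < B.2.1 ∨ (A.2.1 = B.2.1 ∧ A.2.2 < B.2.2)))

/-- An `ℓ`-multipartition of `n`. -/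
structure Multipartition (ℓ n : ℕ) : Type where
  part : ℕ → ℕ → ℕ
  comp_bound : ∀ l, ℓ ≤ l → ∀ r, part l r = 0
  antitone : ∀ l, Antitone (part l)
  row_bound : ∀ l r, n ≤ r → part l r = 0
  size : (∑ l ∈ Finset.range ℓ, ∑ r ∈ Finset.range n, part l r) = n

/-- The diagram of a multipartition. -/
def Multipartition.diagram {ℓ n : ℕ} (μ : Multipartition ℓ n) : Set Node :=
  {A | A.2.2 < μ.part A.1 A.2.1}

/-- A standard tableau: a bijection from the diagram of its shape onto `{1, …, n}`
that increases along rows and down columns of each component (it takes the value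
`0` off the diagram, so that it is determined by its entries). -/
structure StdTableau (ℓ n : ℕ) : Type where
  shape : Multipartition ℓ n
  entry : Node → ℕ
  entry_zero : ∀ A, A ∉ shape.diagram → entry A = 0
  bijOn : Set.BijOn entry shape.diagram (Set.Icc 1 n)
  row_inc : ∀ l r c, (l, r, c + 1) ∈ shape.diagram → entry (l, r, c) < entry (l, r, c + 1)
  col_inc : ∀ l r c, (l, r + 1, c) ∈ shape.diagram → entry (l, r, c) < entry (l, r + 1, c)

/-- The node of a standard tableau containing the entry `k`. -/
noncomputable def StdTableau.node {ℓ n : ℕ} (T : StdTableau ℓ n) (k : ℕ) : Node :=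
  Function.invFunOn T.entry T.shape.diagram k

/-- The content `c_k(T) = κ_l + c - r` of the entry `k` in the tableau `T`
(`1 ≤ k ≤ n`). -/
noncomputable def content {ℓ n : ℕ} (κ : ℕ → ℤ) (T : StdTableau ℓ n) (k : ℕ) : ℤ :=
  κ (T.node k).1 + ((T.node k).2.2 : ℤ) - ((T.node k).2.1 : ℤ)

/-- The residue sequence of a standard tableau, in `I^n` with `I = ℤ/eℤ`. -/
noncomputable def resSeq {ℓ n : ℕ} (e : ℕ) (κ : ℕ → ℤ) (T : StdTableau ℓ n) :
    Fin n → ZMod e :=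
  fun k => ((content κ T (k.1 + 1) : ℤ) : ZMod e)

/-- The residue of a node. -/
def resNode (e : ℕ) (κ : ℕ → ℤ) (A : Node) : ZMod e :=
  ((κ A.1 + (A.2.2 : ℤ) - (A.2.1 : ℤ) : ℤ) : ZMod e)

/-- A set of nodes is the diagram of a multipartition (with at most `ℓ` components)
iff it is finite and downward closed in rows and columns. -/
def IsDiagramSet (ℓ : ℕ) (S : Set Node) : Prop :=
  S.Finite ∧ (∀ A ∈ S, A.1 < ℓ) ∧
    (∀ l r c, (l, r, c + 1) ∈ S → (l, r, c) ∈ S) ∧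
    (∀ l r c, (l, r + 1, c) ∈ S → (l, r, c) ∈ S)

/-- `A` is an addable node of the diagram `S`. -/
def Addable (ℓ : ℕ) (S : Set Node) (A : Node) : Prop :=
  A ∉ S ∧ IsDiagramSet ℓ (S ∪ {A})

/-- `A` is a removable node of the diagram `S`. -/
def Removable (ℓ : ℕ) (S : Set Node) (A : Node) : Prop :=
  A ∈ S ∧ IsDiagramSet ℓ (S \ {A})

/-- `d_A(S)`: the number of addable nodes of `S` of the same residue as `A` strictly
below `A`, minus the number of removable ones. -/
noncomputable def dNode (ℓ e : ℕ) (κ : ℕ → ℤ) (S : Set Node) (A : Node) : ℤ :=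
  (Set.ncard {B | Addable ℓ S B ∧ resNode e κ B = resNode e κ A ∧ nodeBelow A B} : ℤ) -
    (Set.ncard {B | Removable ℓ S B ∧ resNode e κ B = resNode e κ A ∧ nodeBelow A B} : ℤ)

/-- The Brundan–Kleshchev–Wang degree `deg_e(T)` of a standard tableau, written as the
telescoping sum of the recursion `deg_e(T) = deg_e(T↓(n-1)) + d_A(Shape(T))`. -/
noncomputable def degE {ℓ n : ℕ} (e : ℕ) (κ : ℕ → ℤ) (T : StdTableau ℓ n) : ℤ :=
  ∑ m ∈ Finset.Icc 1 n,
    dNode ℓ e κ {A | A ∈ T.shape.diagram ∧ T.entry A ≤ m} (T.node m)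

/-- The restriction of the diagram of `T` to entries `≤ m` (the diagram of `Shape(T↓m)`). -/
def restDiag {ℓ n : ℕ} (T : StdTableau ℓ n) (m : ℕ) : Set Node :=
  {A | A ∈ T.shape.diagram ∧ T.entry A ≤ m}

/-- Dominance order on standard tableaux: `domTab S T` iff `S ⊵ T`. -/
def domTab {ℓ n : ℕ} (S T : StdTableau ℓ n) : Prop :=
  ∀ m l i : ℕ,
    Set.ncard {A | A ∈ restDiag T m ∧ (A.1 < l ∨ (A.1 = l ∧ A.2.1 ≤ i))} ≤
      Set.ncard {A | A ∈ restDiag S m ∧ (A.1 < l ∨ (A.1 = l ∧ A.2.1 ≤ i))}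

/-- Interchange the entries `r` and `r + 1` in an entry function. -/
def swapEntry (f : Node → ℕ) (r : ℕ) : Node → ℕ :=
  fun A => if f A = r then r + 1 else if f A = r + 1 then r else f A

/-- `ρ_r(T) = c_r(T) - c_{r+1}(T)`, the axial distance. -/
noncomputable def rhoTab {ℓ n : ℕ} (κ : ℕ → ℤ) (T : StdTableau ℓ n) (r : ℕ) : ℤ :=
  content κ T r - content κ T (r + 1)

/-- The entry function of the row-reading initial tableau `t^λ`. -/
noncomputable def tlamEntry {ℓ n : ℕ} (μ : Multipartition ℓ n) (A : Node) : ℕ :=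
  if A ∈ μ.diagram then
    (∑ l ∈ Finset.range A.1, ∑ r ∈ Finset.range n, μ.part l r) +
      (∑ r ∈ Finset.range A.2.1, μ.part A.1 r) + A.2.2 + 1
  else 0

/-- The finite set of possible contents of standard tableaux of size `n`. -/
noncomputable def contFinset (ℓ n : ℕ) (κ : ℕ → ℤ) : Finset ℤ :=
  ((Finset.range ℓ ×ˢ Finset.range n ×ˢ Finset.range n).image
      (fun x => κ x.1 + (x.2.2 : ℤ) - (x.2.1 : ℤ))).filter
    (fun c => ∃ T : StdTableau ℓ n, ∃ k, 1 ≤ k ∧ k ≤ n ∧ content κ T k = c)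

/-- The standard tableau (if any) obtained from `T` by interchanging the entries
`r` and `r + 1`; i.e. `T·s_r` if it is standard, and `none` otherwise. -/
noncomputable def oSwapO {ℓ n : ℕ} (T : StdTableau ℓ n) (r : ℕ) :
    Option (StdTableau ℓ n) :=
  if h : ∃ V : StdTableau ℓ n, V.entry = swapEntry T.entry r then some (Classical.choose h)
  else none

/-- `oSwap` extended to `Option`. -/
noncomputable def oSwap {ℓ n : ℕ} (X : Option (StdTableau ℓ n)) (r : ℕ) :
    Option (StdTableau ℓ n) :=
  X.bind fun T => oSwapO T r

/-- Evaluate a seminormal coefficient system on an optional tableau (by `0` if none). -/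
noncomputable def aE {ℓ n : ℕ} {K : Type*} [Field K] (α : ℕ → StdTableau ℓ n → K) (r : ℕ)
    (X : Option (StdTableau ℓ n)) : K :=
  X.elim 0 (α r)

/-! ## Separation and idempotent subrings -/

/-- `(K, t)` separates `Std(P_n)` (field version):
`[n]!_t ∏_{1 ≤ l < m ≤ ℓ} ∏_{-n < d < n} [κ_l - κ_m + d]_t ≠ 0`. -/
def SeparatesF {K : Type*} [Field K] (t : Kˣ) (n ℓ : ℕ) (κ : ℕ → ℤ) : Prop :=
  ((∏ d ∈ Finset.Icc 1 n, qint (t : K) (d : ℤ)) *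
      ∏ l ∈ Finset.range ℓ, ∏ m ∈ Finset.Ioo l ℓ,
        ∏ d ∈ Finset.Ioo (-(n : ℤ)) (n : ℤ), qint (t : K) (κ l - κ m + d)) ≠ 0

/-- `(O, t)` separates `Std(P_n)` (subring version): the separation element is a unit. -/
def SeparatesU {O : Type*} [CommRing O] (t : Oˣ) (n ℓ : ℕ) (κ : ℕ → ℤ) : Prop :=
  IsUnit ((∏ d ∈ Finset.Icc 1 n, qintU t (d : ℤ)) *
      ∏ l ∈ Finset.range ℓ, ∏ m ∈ Finset.Ioo l ℓ,
        ∏ d ∈ Finset.Ioo (-(n : ℤ)) (n : ℤ), qintU t (κ l - κ m + d))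

/-- `(O, t)` is an `e`-idempotent subring of the field `K`. -/
def IsIdempotentSubring {K : Type*} [Field K] (O : Subring K) (t : Oˣ) (e n ℓ : ℕ)
    (κ : ℕ → ℤ) : Prop :=
  SeparatesU t n ℓ κ ∧
    (∀ k : ℤ, ¬(e : ℤ) ∣ k → IsUnit (qintU t k)) ∧
    (∀ k : ℤ, (e : ℤ) ∣ k → qintU t k ∈ Ideal.jacobson (⊥ : Ideal O))

/-! ## The cyclotomic Hecke algebra, by generators and relations -/

/-- Generators `L_1, …, L_n`, `T_1, …, T_{n-1}` (here `0`-based). -/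
inductive HeckeGen (n : ℕ) : Type
  | L : Fin n → HeckeGen n
  | T : Fin (n - 1) → HeckeGen n

/-- The position `r` of the pair `(r, r+1)` interchanged by the `r`-th transposition. -/
def pL {n : ℕ} (r : Fin (n - 1)) : Fin n := ⟨r.1, by have := r.2; omega⟩

/-- The position `r + 1` of the pair interchanged by the `r`-th transposition. -/
def pR {n : ℕ} (r : Fin (n - 1)) : Fin n := ⟨r.1 + 1, by have := r.2; omega⟩

/-- The position `r + 2`, used in braid relations. -/
def pM {n : ℕ} (r : Fin (n - 1)) (hr : r.1 + 1 < n - 1) : Fin n := ⟨r.1 + 2, by omega⟩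

/-- The free algebra generator `L_k`. -/
def hL (R : Type*) [CommRing R] {n : ℕ} (k : Fin n) : FreeAlgebra R (HeckeGen n) :=
  FreeAlgebra.ι R (HeckeGen.L k)

/-- The free algebra generator `T_r`. -/
def hT (R : Type*) [CommRing R] {n : ℕ} (r : Fin (n - 1)) : FreeAlgebra R (HeckeGen n) :=
  FreeAlgebra.ι R (HeckeGen.T r)

/-- The defining relations of the integral cyclotomic Hecke algebra `H_n(R, t, κ)`. -/
inductive HeckeRel (R : Type*) [CommRing R] (t : Rˣ) (n ℓ : ℕ) (κ : ℕ → ℤ) :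
    FreeAlgebra R (HeckeGen n) → FreeAlgebra R (HeckeGen n) → Prop
  | cyc (h : 0 < n) :
      HeckeRel R t n ℓ κ
        (((List.range ℓ).map fun l =>
          hL R (⟨0, h⟩ : Fin n) - algebraMap R _ (qintU t (κ l))).prod) 0
  | quad (r : Fin (n - 1)) :
      HeckeRel R t n ℓ κ ((hT R r + 1) * (hT R r - algebraMap R _ (t : R))) 0
  | LL (k m : Fin n) : HeckeRel R t n ℓ κ (hL R k * hL R m) (hL R m * hL R k)
  | TTfar (r s : Fin (n - 1)) (h : r.1 + 1 < s.1 ∨ s.1 + 1 < r.1) :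
      HeckeRel R t n ℓ κ (hT R r * hT R s) (hT R s * hT R r)
  | braid (r s : Fin (n - 1)) (h : s.1 = r.1 + 1) :
      HeckeRel R t n ℓ κ (hT R r * hT R s * hT R r) (hT R s * hT R r * hT R s)
  | TL (r : Fin (n - 1)) (k : Fin n) (h : k.1 ≠ r.1 ∧ k.1 ≠ r.1 + 1) :
      HeckeRel R t n ℓ κ (hT R r * hL R k) (hL R k * hT R r)
  | LT (r : Fin (n - 1)) :
      HeckeRel R t n ℓ κ (hL R (pR r) * (hT R r - algebraMap R _ (t : R) + 1))
        (hT R r * hL R (pL r) + 1)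

/-- The integral cyclotomic Hecke algebra of type `A`, `H_n(R, t, κ)`. -/
noncomputable abbrev CycHecke (R : Type*) [CommRing R] (t : Rˣ) (n ℓ : ℕ) (κ : ℕ → ℤ) :
    Type _ :=
  RingQuot (HeckeRel R t n ℓ κ)

/-- The generator `L_k` of the cyclotomic Hecke algebra. -/
noncomputable def Lgen (R : Type*) [CommRing R] (t : Rˣ) (n ℓ : ℕ) (κ : ℕ → ℤ)
    (k : Fin n) : CycHecke R t n ℓ κ :=
  RingQuot.mkAlgHom R (HeckeRel R t n ℓ κ) (hL R k)

/-- The generator `T_r` of the cyclotomic Hecke algebra. -/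
noncomputable def Tgen (R : Type*) [CommRing R] (t : Rˣ) (n ℓ : ℕ) (κ : ℕ → ℤ)
    (r : Fin (n - 1)) : CycHecke R t n ℓ κ :=
  RingQuot.mkAlgHom R (HeckeRel R t n ℓ κ) (hT R r)

end Paper
/-! ## Quiver Hecke (KLR) algebras, by generators and relations -/

namespace Paper

/-- Generators `e(i)` (`i ∈ I^n`), `ψ_1, …, ψ_{n-1}`, `y_1, …, y_n` (here `0`-based). -/
inductive KLRGen (n e : ℕ) : Type
  | idem : (Fin n → ZMod e) → KLRGen n e
  | psi : Fin (n - 1) → KLRGen n e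
  | y : Fin n → KLRGen n e

/-- The free algebra generator `e(i)`. -/
def kE (R : Type*) [CommRing R] {n e : ℕ} (i : Fin n → ZMod e) :
    FreeAlgebra R (KLRGen n e) :=
  FreeAlgebra.ι R (KLRGen.idem i)

/-- The free algebra generator `ψ_r`. -/
def kPsi (R : Type*) [CommRing R] {n e : ℕ} (r : Fin (n - 1)) :
    FreeAlgebra R (KLRGen n e) :=
  FreeAlgebra.ι R (KLRGen.psi r)

/-- The free algebra generator `y_k`. -/
def kY (R : Type*) [CommRing R] {n e : ℕ} (k : Fin n) : FreeAlgebra R (KLRGen n e) :=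
  FreeAlgebra.ι R (KLRGen.y k)

/-- `s_r · i`: interchange the entries of `i` at positions `r` and `r + 1`. -/
def swapSeq {n e : ℕ} (i : Fin n → ZMod e) (r : Fin (n - 1)) : Fin n → ZMod e :=
  fun k => if k = pL r then i (pR r) else if k = pR r then i (pL r) else i k

/-- The defining relations of the cyclotomic quiver Hecke algebra `R_n^Λ(R)` where
`Λ = Σ_l Λ_{κ_l mod e}`. -/
inductive KLRRel (R : Type*) [CommRing R] (n e ℓ : ℕ) [NeZero e] (κ : ℕ → ℤ) :
    FreeAlgebra R (KLRGen n e) → FreeAlgebra R (KLRGen n e) → Prop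
  | cyc (h : 0 < n) (i : Fin n → ZMod e) :
      KLRRel R n e ℓ κ
        ((kY R (⟨0, h⟩ : Fin n)) ^
            (((Finset.range ℓ).filter fun l => ((κ l : ZMod e) = i ⟨0, h⟩)).card) *
          kE R i) 0
  | orth (i j : Fin n → ZMod e) (h : i ≠ j) : KLRRel R n e ℓ κ (kE R i * kE R j) 0
  | idem (i : Fin n → ZMod e) : KLRRel R n e ℓ κ (kE R i * kE R i) (kE R i)
  | complete : KLRRel R n e ℓ κ (∑ i : Fin n → ZMod e, kE R i) 1
  | yE (k : Fin n) (i : Fin n → ZMod e) :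
      KLRRel R n e ℓ κ (kY R k * kE R i) (kE R i * kY R k)
  | psiE (r : Fin (n - 1)) (i : Fin n → ZMod e) :
      KLRRel R n e ℓ κ (kPsi R r * kE R i) (kE R (swapSeq i r) * kPsi R r)
  | yy (k m : Fin n) : KLRRel R n e ℓ κ (kY R k * kY R m) (kY R m * kY R k)
  | psiyEq (r : Fin (n - 1)) (i : Fin n → ZMod e) (h : i (pL r) = i (pR r)) :
      KLRRel R n e ℓ κ (kPsi R r * kY R (pR r) * kE R i)
        ((kY R (pL r) * kPsi R r + 1) * kE R i)
  | psiyNe (r : Fin (n - 1)) (i : Fin n → ZMod e) (h : i (pL r) ≠ i (pR r)) :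
      KLRRel R n e ℓ κ (kPsi R r * kY R (pR r) * kE R i)
        (kY R (pL r) * kPsi R r * kE R i)
  | ypsiEq (r : Fin (n - 1)) (i : Fin n → ZMod e) (h : i (pL r) = i (pR r)) :
      KLRRel R n e ℓ κ (kY R (pR r) * kPsi R r * kE R i)
        ((kPsi R r * kY R (pL r) + 1) * kE R i)
  | ypsiNe (r : Fin (n - 1)) (i : Fin n → ZMod e) (h : i (pL r) ≠ i (pR r)) :
      KLRRel R n e ℓ κ (kY R (pR r) * kPsi R r * kE R i)
        (kPsi R r * kY R (pL r) * kE R i)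
  | psiyFar (r : Fin (n - 1)) (k : Fin n) (h : k.1 ≠ r.1 ∧ k.1 ≠ r.1 + 1) :
      KLRRel R n e ℓ κ (kPsi R r * kY R k) (kY R k * kPsi R r)
  | psipsiFar (r s : Fin (n - 1)) (h : r.1 + 1 < s.1 ∨ s.1 + 1 < r.1) :
      KLRRel R n e ℓ κ (kPsi R r * kPsi R s) (kPsi R s * kPsi R r)
  | quadEq (r : Fin (n - 1)) (i : Fin n → ZMod e) (h : i (pL r) = i (pR r)) :
      KLRRel R n e ℓ κ (kPsi R r ^ 2 * kE R i) 0
  | quadR (r : Fin (n - 1)) (i : Fin n → ZMod e)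
      (h1 : i (pR r) = i (pL r) + 1) (h2 : i (pL r) ≠ i (pR r) + 1) :
      KLRRel R n e ℓ κ (kPsi R r ^ 2 * kE R i) ((kY R (pL r) - kY R (pR r)) * kE R i)
  | quadL (r : Fin (n - 1)) (i : Fin n → ZMod e)
      (h1 : i (pL r) = i (pR r) + 1) (h2 : i (pR r) ≠ i (pL r) + 1) :
      KLRRel R n e ℓ κ (kPsi R r ^ 2 * kE R i) ((kY R (pR r) - kY R (pL r)) * kE R i)
  | quadBoth (r : Fin (n - 1)) (i : Fin n → ZMod e)
      (h1 : i (pR r) = i (pL r) + 1) (h2 : i (pL r) = i (pR r) + 1) :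
      KLRRel R n e ℓ κ (kPsi R r ^ 2 * kE R i)
        ((kY R (pR r) - kY R (pL r)) * (kY R (pL r) - kY R (pR r)) * kE R i)
  | quadNone (r : Fin (n - 1)) (i : Fin n → ZMod e) (h1 : i (pL r) ≠ i (pR r))
      (h2 : i (pR r) ≠ i (pL r) + 1) (h3 : i (pL r) ≠ i (pR r) + 1) :
      KLRRel R n e ℓ κ (kPsi R r ^ 2 * kE R i) (kE R i)
  | braidR (r : Fin (n - 1)) (hr : r.1 + 1 < n - 1) (i : Fin n → ZMod e)
      (h0 : i (pM r hr) = i (pL r)) (h1 : i (pR r) = i (pL r) + 1)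
      (h2 : i (pL r) ≠ i (pR r) + 1) :
      KLRRel R n e ℓ κ (kPsi R r * kPsi R ⟨r.1 + 1, hr⟩ * kPsi R r * kE R i)
        ((kPsi R ⟨r.1 + 1, hr⟩ * kPsi R r * kPsi R ⟨r.1 + 1, hr⟩ - 1) * kE R i)
  | braidL (r : Fin (n - 1)) (hr : r.1 + 1 < n - 1) (i : Fin n → ZMod e)
      (h0 : i (pM r hr) = i (pL r)) (h1 : i (pL r) = i (pR r) + 1)
      (h2 : i (pR r) ≠ i (pL r) + 1) :
      KLRRel R n e ℓ κ (kPsi R r * kPsi R ⟨r.1 + 1, hr⟩ * kPsi R r * kE R i)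
        ((kPsi R ⟨r.1 + 1, hr⟩ * kPsi R r * kPsi R ⟨r.1 + 1, hr⟩ + 1) * kE R i)
  | braidBoth (r : Fin (n - 1)) (hr : r.1 + 1 < n - 1) (i : Fin n → ZMod e)
      (h0 : i (pM r hr) = i (pL r)) (h1 : i (pR r) = i (pL r) + 1)
      (h2 : i (pL r) = i (pR r) + 1) :
      KLRRel R n e ℓ κ (kPsi R r * kPsi R ⟨r.1 + 1, hr⟩ * kPsi R r * kE R i)
        ((kPsi R ⟨r.1 + 1, hr⟩ * kPsi R r * kPsi R ⟨r.1 + 1, hr⟩ +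
            kY R (pL r) - 2 * kY R (pR r) + kY R (pM r hr)) * kE R i)
  | braidNone (r : Fin (n - 1)) (hr : r.1 + 1 < n - 1) (i : Fin n → ZMod e)
      (h : ¬(i (pM r hr) = i (pL r) ∧
        (i (pR r) = i (pL r) + 1 ∨ i (pL r) = i (pR r) + 1))) :
      KLRRel R n e ℓ κ (kPsi R r * kPsi R ⟨r.1 + 1, hr⟩ * kPsi R r * kE R i)
        (kPsi R ⟨r.1 + 1, hr⟩ * kPsi R r * kPsi R ⟨r.1 + 1, hr⟩ * kE R i)

/-- The cyclotomic quiver Hecke algebra `R_n^Λ(R)`, `Λ = Σ_l Λ_{κ_l mod e}`. -/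
noncomputable abbrev KLR (R : Type*) [CommRing R] (n e ℓ : ℕ) [NeZero e] (κ : ℕ → ℤ) :
    Type _ :=
  RingQuot (KLRRel R n e ℓ κ)

/-- The generator `e(i)` of the cyclotomic quiver Hecke algebra. -/
noncomputable def KeGen (R : Type*) [CommRing R] (n e ℓ : ℕ) [NeZero e] (κ : ℕ → ℤ)
    (i : Fin n → ZMod e) : KLR R n e ℓ κ :=
  RingQuot.mkAlgHom R (KLRRel R n e ℓ κ) (kE R i)

/-- The generator `ψ_r` of the cyclotomic quiver Hecke algebra. -/
noncomputable def KpsiGen (R : Type*) [CommRing R] (n e ℓ : ℕ) [NeZero e] (κ : ℕ → ℤ)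
    (r : Fin (n - 1)) : KLR R n e ℓ κ :=
  RingQuot.mkAlgHom R (KLRRel R n e ℓ κ) (kPsi R r)

/-- The generator `y_k` of the cyclotomic quiver Hecke algebra. -/
noncomputable def KyGen (R : Type*) [CommRing R] (n e ℓ : ℕ) [NeZero e] (κ : ℕ → ℤ)
    (k : Fin n) : KLR R n e ℓ κ :=
  RingQuot.mkAlgHom R (KLRRel R n e ℓ κ) (kY R k)

end Paper
/-! ## The deformed cyclotomic quiver Hecke algebra -/

namespace Paper

/-- `y_k^⟨d⟩ = t^d y_k + [d]_t` in the free algebra. -/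
def ydot (R : Type*) [CommRing R] (t : Rˣ) {n e : ℕ} (d : ℤ) (k : Fin n) :
    FreeAlgebra R (KLRGen n e) :=
  algebraMap R _ ((t ^ d : Rˣ) : R) * kY R k + algebraMap R _ (qintU t d)

/-- `ρ_r(i) = î_r - î_{r+1}` for `i ∈ I^n`. -/
def rhoI {n e : ℕ} (i : Fin n → ZMod e) (r : Fin (n - 1)) : ℤ :=
  ((i (pL r)).val : ℤ) - ((i (pR r)).val : ℤ)

/-- The defining relations of the deformed cyclotomic quiver Hecke algebra `R_n(O)`. -/
inductive DefKLRRel (R : Type*) [CommRing R] (t : Rˣ) (n e ℓ : ℕ) [NeZero e] (κ : ℕ → ℤ) :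
    FreeAlgebra R (KLRGen n e) → FreeAlgebra R (KLRGen n e) → Prop
  | cyc (h : 0 < n) (i : Fin n → ZMod e) :
      DefKLRRel R t n e ℓ κ
        ((((List.range ℓ).map fun l =>
            if ((κ l : ZMod e) = i ⟨0, h⟩) then
              kY R (⟨0, h⟩ : Fin n) -
                algebraMap R _ (qintU t (κ l - ((i ⟨0, h⟩).val : ℤ)))
            else 1).prod) * kE R i) 0
  | orth (i j : Fin n → ZMod e) (h : i ≠ j) : DefKLRRel R t n e ℓ κ (kE R i * kE R j) 0
  | idem (i : Fin n → ZMod e) : DefKLRRel R t n e ℓ κ (kE R i * kE R i) (kE R i)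
  | complete : DefKLRRel R t n e ℓ κ (∑ i : Fin n → ZMod e, kE R i) 1
  | yE (k : Fin n) (i : Fin n → ZMod e) :
      DefKLRRel R t n e ℓ κ (kY R k * kE R i) (kE R i * kY R k)
  | psiE (r : Fin (n - 1)) (i : Fin n → ZMod e) :
      DefKLRRel R t n e ℓ κ (kPsi R r * kE R i) (kE R (swapSeq i r) * kPsi R r)
  | yy (k m : Fin n) : DefKLRRel R t n e ℓ κ (kY R k * kY R m) (kY R m * kY R k)
  | psiyEq (r : Fin (n - 1)) (i : Fin n → ZMod e) (h : i (pL r) = i (pR r)) :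
      DefKLRRel R t n e ℓ κ (kPsi R r * kY R (pR r) * kE R i)
        ((kY R (pL r) * kPsi R r + 1) * kE R i)
  | psiyNe (r : Fin (n - 1)) (i : Fin n → ZMod e) (h : i (pL r) ≠ i (pR r)) :
      DefKLRRel R t n e ℓ κ (kPsi R r * kY R (pR r) * kE R i)
        (kY R (pL r) * kPsi R r * kE R i)
  | ypsiEq (r : Fin (n - 1)) (i : Fin n → ZMod e) (h : i (pL r) = i (pR r)) :
      DefKLRRel R t n e ℓ κ (kY R (pR r) * kPsi R r * kE R i)
        ((kPsi R r * kY R (pL r) + 1) * kE R i)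
  | ypsiNe (r : Fin (n - 1)) (i : Fin n → ZMod e) (h : i (pL r) ≠ i (pR r)) :
      DefKLRRel R t n e ℓ κ (kY R (pR r) * kPsi R r * kE R i)
        (kPsi R r * kY R (pL r) * kE R i)
  | psiyFar (r : Fin (n - 1)) (k : Fin n) (h : k.1 ≠ r.1 ∧ k.1 ≠ r.1 + 1) :
      DefKLRRel R t n e ℓ κ (kPsi R r * kY R k) (kY R k * kPsi R r)
  | psipsiFar (r s : Fin (n - 1)) (h : r.1 + 1 < s.1 ∨ s.1 + 1 < r.1) :
      DefKLRRel R t n e ℓ κ (kPsi R r * kPsi R s) (kPsi R s * kPsi R r)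
  | quadEq (r : Fin (n - 1)) (i : Fin n → ZMod e) (h : i (pL r) = i (pR r)) :
      DefKLRRel R t n e ℓ κ (kPsi R r ^ 2 * kE R i) 0
  | quadR (r : Fin (n - 1)) (i : Fin n → ZMod e)
      (h1 : i (pR r) = i (pL r) + 1) (h2 : i (pL r) ≠ i (pR r) + 1) :
      DefKLRRel R t n e ℓ κ (kPsi R r ^ 2 * kE R i)
        ((ydot R t (1 + rhoI i r) (pL r) - kY R (pR r)) * kE R i)
  | quadL (r : Fin (n - 1)) (i : Fin n → ZMod e)
      (h1 : i (pL r) = i (pR r) + 1) (h2 : i (pR r) ≠ i (pL r) + 1) :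
      DefKLRRel R t n e ℓ κ (kPsi R r ^ 2 * kE R i)
        ((ydot R t (1 - rhoI i r) (pR r) - kY R (pL r)) * kE R i)
  | quadBoth (r : Fin (n - 1)) (i : Fin n → ZMod e)
      (h1 : i (pR r) = i (pL r) + 1) (h2 : i (pL r) = i (pR r) + 1) :
      DefKLRRel R t n e ℓ κ (kPsi R r ^ 2 * kE R i)
        ((ydot R t (1 + rhoI i r) (pL r) - kY R (pR r)) *
          (ydot R t (1 - rhoI i r) (pR r) - kY R (pL r)) * kE R i)
  | quadNone (r : Fin (n - 1)) (i : Fin n → ZMod e) (h1 : i (pL r) ≠ i (pR r))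
      (h2 : i (pR r) ≠ i (pL r) + 1) (h3 : i (pL r) ≠ i (pR r) + 1) :
      DefKLRRel R t n e ℓ κ (kPsi R r ^ 2 * kE R i) (kE R i)
  | braidBoth (r : Fin (n - 1)) (hr : r.1 + 1 < n - 1) (i : Fin n → ZMod e)
      (h0 : i (pM r hr) = i (pL r)) (h1 : i (pR r) = i (pL r) + 1)
      (h2 : i (pL r) = i (pR r) + 1) :
      DefKLRRel R t n e ℓ κ
        ((kPsi R r * kPsi R ⟨r.1 + 1, hr⟩ * kPsi R r -
            kPsi R ⟨r.1 + 1, hr⟩ * kPsi R r * kPsi R ⟨r.1 + 1, hr⟩) * kE R i)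
        ((ydot R t (1 + rhoI i r) (pL r) + ydot R t (1 + rhoI i r) (pM r hr) -
            ydot R t (1 + rhoI i r) (pR r) - ydot R t (1 - rhoI i r) (pR r)) * kE R i)
  | braidR (r : Fin (n - 1)) (hr : r.1 + 1 < n - 1) (i : Fin n → ZMod e)
      (h0 : i (pM r hr) = i (pL r)) (h1 : i (pR r) = i (pL r) + 1)
      (h2 : i (pL r) ≠ i (pR r) + 1) :
      DefKLRRel R t n e ℓ κ
        ((kPsi R r * kPsi R ⟨r.1 + 1, hr⟩ * kPsi R r -
            kPsi R ⟨r.1 + 1, hr⟩ * kPsi R r * kPsi R ⟨r.1 + 1, hr⟩) * kE R i)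
        (algebraMap R _ (-(((t ^ (1 + rhoI i r) : Rˣ) : R))) * kE R i)
  | braidL (r : Fin (n - 1)) (hr : r.1 + 1 < n - 1) (i : Fin n → ZMod e)
      (h0 : i (pM r hr) = i (pL r)) (h1 : i (pL r) = i (pR r) + 1)
      (h2 : i (pR r) ≠ i (pL r) + 1) :
      DefKLRRel R t n e ℓ κ
        ((kPsi R r * kPsi R ⟨r.1 + 1, hr⟩ * kPsi R r -
            kPsi R ⟨r.1 + 1, hr⟩ * kPsi R r * kPsi R ⟨r.1 + 1, hr⟩) * kE R i)
        (kE R i)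
  | braidNone (r : Fin (n - 1)) (hr : r.1 + 1 < n - 1) (i : Fin n → ZMod e)
      (h : ¬(i (pM r hr) = i (pL r) ∧
        (i (pR r) = i (pL r) + 1 ∨ i (pL r) = i (pR r) + 1))) :
      DefKLRRel R t n e ℓ κ
        ((kPsi R r * kPsi R ⟨r.1 + 1, hr⟩ * kPsi R r -
            kPsi R ⟨r.1 + 1, hr⟩ * kPsi R r * kPsi R ⟨r.1 + 1, hr⟩) * kE R i) 0

/-- The deformed cyclotomic quiver Hecke algebra `R_n(R)`. -/
noncomputable abbrev DefKLR (R : Type*) [CommRing R] (t : Rˣ) (n e ℓ : ℕ) [NeZero e]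
    (κ : ℕ → ℤ) : Type _ :=
  RingQuot (DefKLRRel R t n e ℓ κ)

/-- The generator `f_i` of the deformed cyclotomic quiver Hecke algebra. -/
noncomputable def DfGen (R : Type*) [CommRing R] (t : Rˣ) (n e ℓ : ℕ) [NeZero e]
    (κ : ℕ → ℤ) (i : Fin n → ZMod e) : DefKLR R t n e ℓ κ :=
  RingQuot.mkAlgHom R (DefKLRRel R t n e ℓ κ) (kE R i)

/-- The generator `ψ_r` of the deformed cyclotomic quiver Hecke algebra. -/
noncomputable def DpsiGen (R : Type*) [CommRing R] (t : Rˣ) (n e ℓ : ℕ) [NeZero e]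
    (κ : ℕ → ℤ) (r : Fin (n - 1)) : DefKLR R t n e ℓ κ :=
  RingQuot.mkAlgHom R (DefKLRRel R t n e ℓ κ) (kPsi R r)

/-- The generator `y_k` of the deformed cyclotomic quiver Hecke algebra. -/
noncomputable def DyGen (R : Type*) [CommRing R] (t : Rˣ) (n e ℓ : ℕ) [NeZero e]
    (κ : ℕ → ℤ) (k : Fin n) : DefKLR R t n e ℓ κ :=
  RingQuot.mkAlgHom R (DefKLRRel R t n e ℓ κ) (kY R k)

/-! ## Seminormal idempotents -/

/-- The seminormal idempotent `F_T` of the semisimple cyclotomic Hecke algebra: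
`F_T = ∏_{k=1}^n ∏_{c ∈ Cont(n), [c_k(T)] ≠ [c]} (L_k - [c]) / ([c_k(T)] - [c])`. -/
noncomputable def Fidem (K : Type*) [Field K] (tK : Kˣ) (n ℓ : ℕ) (κ : ℕ → ℤ)
    (T : StdTableau ℓ n) : CycHecke K tK n ℓ κ :=
  ((List.finRange n).map (fun k =>
    (((contFinset ℓ n κ).sort (· ≤ ·)).map (fun c =>
      if qint (tK : K) (content κ T (k.1 + 1)) ≠ qint (tK : K) c then
        (Lgen K tK n ℓ κ k - algebraMap K _ (qint (tK : K) c)) *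
          algebraMap K _ ((qint (tK : K) (content κ T (k.1 + 1)) - qint (tK : K) c)⁻¹)
      else 1)).prod)).prod

/-- The residue idempotent `f_i = Σ_{T ∈ Std(i)} F_T`. -/
noncomputable def fres (K : Type*) [Field K] (tK : Kˣ) (n ℓ e : ℕ) (κ : ℕ → ℤ)
    (i : Fin n → ZMod e) : CycHecke K tK n ℓ κ :=
  ∑ᶠ T : {T : StdTableau ℓ n // resSeq e κ T = i}, Fidem K tK n ℓ κ T.1

/-- The simultaneous two-sided eigenspace `H_{S,T}` of the Jucys–Murphy elements. -/
noncomputable def eigSub (K : Type*) [Field K] (tK : Kˣ) (n ℓ : ℕ) (κ : ℕ → ℤ)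
    (S T : StdTableau ℓ n) : Submodule K (CycHecke K tK n ℓ κ) where
  carrier := {h | ∀ k : Fin n,
      Lgen K tK n ℓ κ k * h = qint (tK : K) (content κ S (k.1 + 1)) • h ∧
      h * Lgen K tK n ℓ κ k = qint (tK : K) (content κ T (k.1 + 1)) • h}
  add_mem' := by
    intro a b ha hb
    intro k
    obtain ⟨h1, h2⟩ := ha k
    obtain ⟨h3, h4⟩ := hb k
    exact ⟨by rw [mul_add, h1, h3, smul_add], by rw [add_mul, h2, h4, smul_add]⟩
  zero_mem' := by intro k; simp
  smul_mem' := by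
    intro c a ha
    intro k
    obtain ⟨h1, h2⟩ := ha k
    constructor
    · rw [mul_smul_comm, h1, smul_comm]
    · rw [smul_mul_assoc, h2, smul_comm]

end Paper

namespace Paper

/-- The fraction field `ℚ(t)` of `ℤ[t]`. -/
noncomputable abbrev FF : Type := FractionRing (Polynomial ℤ)

/-- The image of the indeterminate `t` in `ℚ(t)`. -/
noncomputable def xF : FF := algebraMap (Polynomial ℤ) FF Polynomial.X

/-! ## Proof of the theorem -/

lemma qint_eq_prod (N : ℕ) (d : ℤ) (hd : 0 < d) (hN : d ≤ N) :
    qint xF d = ∏ e ∈ Finset.Icc 2 N,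
      (algebraMap (Polynomial ℤ) FF (Polynomial.cyclotomic e ℤ)) ^
        (if (e : ℤ) ∣ d then (1 : ℤ) else 0) := by
  obtain ⟨k, rfl⟩ := Int.eq_ofNat_of_zero_le hd.le
  have hk : 0 < k := by exact_mod_cast hd
  have hkN : k ≤ N := by exact_mod_cast hN
  have h1 : qint xF (k : ℤ) = algebraMap (Polynomial ℤ) FF
      (∑ i ∈ Finset.range k, Polynomial.X ^ i) := by
    simp [qint, xF]
  rw [h1, ← Polynomial.prod_cyclotomic_eq_geom_sum hk, map_prod]
  have h2 : k.divisors.erase 1 = (Finset.Icc 2 N).filter (fun e => e ∣ k) := by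
    ext e
    simp only [Finset.mem_erase, Nat.mem_divisors, Finset.mem_filter, Finset.mem_Icc]
    constructor
    · rintro ⟨he, hek, _⟩
      have := Nat.le_of_dvd hk hek
      have := Nat.pos_of_dvd_of_pos hek hk
      exact ⟨⟨by omega, by omega⟩, hek⟩
    · rintro ⟨⟨he, _⟩, hek⟩
      exact ⟨by omega, hek, by omega⟩
  rw [h2, Finset.prod_filter]
  refine Finset.prod_congr rfl fun e _ => ?_
  by_cases h : e ∣ k
  · have h' : (e : ℤ) ∣ (k : ℤ) := by exact_mod_cast h
    simp [h, h']
  · have h' : ¬ (e : ℤ) ∣ (k : ℤ) := by exact_mod_cast h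
    simp [h, h']

lemma row_lt {ℓ n : ℕ} (μ : Multipartition ℓ n) {A : Node} (hA : A ∈ μ.diagram) :
    A.1 < ℓ ∧ A.2.1 < n := by
  have h : A.2.2 < μ.part A.1 A.2.1 := hA
  constructor
  · by_contra hc
    rw [μ.comp_bound _ (by omega)] at h
    omega
  · by_contra hc
    rw [μ.row_bound _ _ (by omega)] at h
    omega

lemma tlam_lt {ℓ n : ℕ} (μ : Multipartition ℓ n) {A B : Node} (hA : A ∈ μ.diagram)
    (hB : B ∈ μ.diagram) (h : nodeBelow A B) : tlamEntry μ A < tlamEntry μ B := by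
  obtain ⟨hl, hr⟩ := row_lt μ hA
  have hAc : A.2.2 < μ.part A.1 A.2.1 := hA
  simp only [tlamEntry, hA, hB, if_true]
  have key : ∀ k, A.2.1 < k → (∑ r ∈ Finset.range A.2.1, μ.part A.1 r) + A.2.2 + 1 ≤
      ∑ r ∈ Finset.range k, μ.part A.1 r := by
    intro k hk
    have h1 : ∑ r ∈ Finset.range (A.2.1 + 1), μ.part A.1 r ≤
        ∑ r ∈ Finset.range k, μ.part A.1 r :=
      Finset.sum_le_sum_of_subset (Finset.range_mono hk)
    rw [Finset.sum_range_succ] at h1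
    omega
  rcases h with h | ⟨h, h' | ⟨h', h''⟩⟩
  · have h1 : ∑ l ∈ Finset.range (A.1 + 1), ∑ r ∈ Finset.range n, μ.part l r ≤
        ∑ l ∈ Finset.range B.1, ∑ r ∈ Finset.range n, μ.part l r :=
      Finset.sum_le_sum_of_subset (Finset.range_mono h)
    rw [Finset.sum_range_succ] at h1
    have := key n hr
    omega
  · have := key _ h'
    rw [← h]
    omega
  · rw [← h, ← h']
    omega

lemma tlam_le_iff {ℓ n : ℕ} (μ : Multipartition ℓ n) {A B : Node} (hA : A ∈ μ.diagram)
    (hB : B ∈ μ.diagram) : tlamEntry μ B ≤ tlamEntry μ A ↔ ¬ nodeBelow A B := by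
  constructor
  · intro h h'
    have := tlam_lt μ hA hB h'
    omega
  · intro h
    by_cases hBA : nodeBelow B A
    · exact (tlam_lt μ hB hA hBA).le
    · have : A = B := by
        simp only [nodeBelow] at h hBA
        obtain ⟨a, b, c⟩ := A
        obtain ⟨a', b', c'⟩ := B
        simp only at h hBA
        have : a = a' := by omega
        have : b = b' := by omega
        have : c = c' := by omega
        simp_all
      rw [this]

lemma dNode_eq {ℓ n e : ℕ} (he : 2 ≤ e) (κ : ℕ → ℤ) (μ : Multipartition ℓ n)
    (hfin : μ.diagram.Finite) (l r c : ℕ) (hA : (l, r, c) ∈ μ.diagram) :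
    dNode ℓ e κ {B | B ∈ μ.diagram ∧ tlamEntry μ B ≤ tlamEntry μ (l, r, c)} (l, r, c) =
      (if (e : ℤ) ∣ ((c : ℤ) + 1) then 1 else 0) +
        ∑ m ∈ Finset.Ioo l ℓ, if (e : ℤ) ∣ κ l - (r : ℤ) + (c : ℤ) - κ m then 1 else 0 := by
  set S : Set Node := {B | B ∈ μ.diagram ∧ tlamEntry μ B ≤ tlamEntry μ (l, r, c)} with hS
  have hmem : ∀ l' r' c', (l', r', c') ∈ S ↔ c' < μ.part l' r' ∧
      (l' < l ∨ (l' = l ∧ (r' < r ∨ (r' = r ∧ c' ≤ c)))) := by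
    intro l' r' c'
    constructor
    · rintro ⟨h1, h2⟩
      rw [tlam_le_iff μ hA h1] at h2
      refine ⟨h1, ?_⟩
      simp only [nodeBelow] at h2
      omega
    · rintro ⟨h1, h2⟩
      refine ⟨h1, ?_⟩
      rw [tlam_le_iff μ hA h1]
      simp only [nodeBelow]
      omega
  have hAc : c < μ.part l r := hA
  obtain ⟨hl, hr⟩ := row_lt μ hA
  simp only at hl hr
  have hSfin : S.Finite := hfin.subset fun B hB => hB.1
  have hSl : ∀ B ∈ S, B.1 < ℓ := fun B hB => (row_lt μ hB.1).1
  have hSrow : ∀ l r c, (l, r, c + 1) ∈ S → (l, r, c) ∈ S := by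
    intro l' r' c' h
    rw [hmem] at h ⊢
    omega
  have hScol : ∀ l r c, (l, r + 1, c) ∈ S → (l, r, c) ∈ S := by
    intro l' r' c' h
    rw [hmem] at h ⊢
    have hm := μ.antitone l' (Nat.le_succ r')
    have hm' : μ.part l' (r' + 1) ≤ μ.part l' r' := hm
    refine ⟨by omega, ?_⟩
    obtain ⟨-, h⟩ := h
    omega
  have hres : ∀ l' r' c', resNode e κ (l', r', c') = resNode e κ (l, r, c) ↔
      (e : ℤ) ∣ (κ l + c - r) - (κ l' + c' - r') := by
    intro l' r' c'
    simp only [resNode]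
    exact ZMod.intCast_eq_intCast_iff_dvd_sub _ _ _
  have hRem : {B | Removable ℓ S B ∧ resNode e κ B = resNode e κ (l, r, c) ∧
      nodeBelow (l, r, c) B} = ∅ := by
    ext ⟨l', r', c'⟩
    simp only [Set.mem_ofPred_eq, Set.mem_empty_iff_false, iff_false]
    rintro ⟨⟨h1, -⟩, -, h2⟩
    rw [hmem] at h1
    simp only [nodeBelow] at h2
    omega
  let F1 : Finset Node := if (e : ℤ) ∣ ((c : ℤ) + 1) then {(l, r + 1, 0)} else ∅
  let F2 : Finset Node := ((Finset.Ioo l ℓ).filter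
    (fun m => (e : ℤ) ∣ κ l - (r : ℤ) + (c : ℤ) - κ m)).image fun m => (m, 0, 0)
  have hF1 : ∀ l' r' c', (l', r', c') ∈ F1 ↔
      ((e : ℤ) ∣ ((c : ℤ) + 1) ∧ l' = l ∧ r' = r + 1 ∧ c' = 0) := by
    intro l' r' c'
    simp only [F1]
    split_ifs with h <;> simp [h]
  have hF2 : ∀ l' r' c', (l', r', c') ∈ F2 ↔
      (l < l' ∧ l' < ℓ ∧ r' = 0 ∧ c' = 0 ∧
        (e : ℤ) ∣ κ l - (r : ℤ) + (c : ℤ) - κ l') := by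
    intro l' r' c'
    simp only [F2, Finset.mem_image, Finset.mem_filter, Finset.mem_Ioo, Prod.mk.injEq]
    constructor
    · rintro ⟨m, ⟨⟨h1, h2⟩, h3⟩, rfl, rfl, rfl⟩
      exact ⟨h1, h2, rfl, rfl, h3⟩
    · rintro ⟨h1, h2, rfl, rfl, h3⟩
      exact ⟨l', ⟨⟨h1, h2⟩, h3⟩, rfl, rfl, rfl⟩
  have hAdd : {B | Addable ℓ S B ∧ resNode e κ B = resNode e κ (l, r, c) ∧
      nodeBelow (l, r, c) B} = ((F1 ∪ F2 : Finset Node) : Set Node) := by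
    ext ⟨l', r', c'⟩
    rw [Finset.mem_coe, Finset.mem_union, hF1, hF2]
    simp only [Set.mem_ofPred_eq]
    rw [hres]
    constructor
    · rintro ⟨⟨h0, -, h1, h2, h3⟩, hd, hb⟩
      simp only [nodeBelow] at hb
      have hl' : l' < ℓ := h1 (l', r', c') (by simp)
      have hup : ∀ k, r' = k + 1 → (l', k, c') ∈ S := by
        rintro k rfl
        have := h3 l' k c' (by simp)
        simpa using this
      have hleft : ∀ k, c' = k + 1 → (l', r', k) ∈ S := by
        rintro k rfl
        have := h2 l' r' k (by simp)
        simpa using this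
      simp only [hmem] at hup hleft
      rcases hb with hb | ⟨hb, hb' | ⟨hb', hb''⟩⟩
      · right
        have hr0 : r' = 0 := by
          by_contra hne
          have := hup (r' - 1) (by omega)
          omega
        have hc0 : c' = 0 := by
          by_contra hne
          have := hleft (c' - 1) (by omega)
          omega
        subst hr0 hc0
        refine ⟨hb, hl', rfl, rfl, ?_⟩
        convert hd using 1
        push_cast
        ring
      · left
        subst hb
        have hr0 : r' = r + 1 := by
          by_contra hne
          have := hup (r' - 1) (by omega)
          omega
        have hc0 : c' = 0 := by
          by_contra hne
          have := hleft (c' - 1) (by omega)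
          omega
        subst hr0 hc0
        refine ⟨?_, rfl, rfl, rfl⟩
        convert hd using 1
        push_cast
        ring
      · exfalso
        subst hb hb'
        have hc1 : c' = c + 1 := by
          by_contra hne
          have := hleft (c' - 1) (by omega)
          omega
        subst hc1
        have h1 : (e : ℤ) ∣ 1 := by
          have h4 : κ l + (c : ℤ) - r - (κ l + ((c + 1 : ℕ) : ℤ) - r) = -1 := by
            push_cast
            ring
          rw [h4] at hd
          exact Int.dvd_neg.1 hd
        have := Int.le_of_dvd one_pos h1
        omega
    · have hfin' : ∀ B, (S ∪ {B}).Finite := fun B => hSfin.union (Set.finite_singleton _)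
      rintro (⟨hd, rfl, rfl, rfl⟩ | ⟨h1, h2, rfl, rfl, hd⟩)
      · refine ⟨⟨?_, hfin' _, ?_, ?_, ?_⟩, ?_, ?_⟩
        · rw [hmem]; omega
        · rintro B (hB | hB)
          · exact hSl B hB
          · rw [Set.mem_singleton_iff.1 hB]; exact hl
        · rintro a b d (hB | hB)
          · exact Or.inl (hSrow _ _ _ hB)
          · simp at hB
        · rintro a b d (hB | hB)
          · exact Or.inl (hScol _ _ _ hB)
          · simp only [Set.mem_singleton_iff, Prod.mk.injEq] at hB
            obtain ⟨rfl, hb, rfl⟩ := hB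
            left
            rw [hmem]
            obtain rfl : b = r := by omega
            omega
        · convert hd using 1
          push_cast
          ring
        · simp [nodeBelow]
      · refine ⟨⟨?_, hfin' _, ?_, ?_, ?_⟩, ?_, ?_⟩
        · rw [hmem]; omega
        · rintro B (hB | hB)
          · exact hSl B hB
          · rw [Set.mem_singleton_iff.1 hB]; exact h2
        · rintro a b d (hB | hB)
          · exact Or.inl (hSrow _ _ _ hB)
          · simp at hB
        · rintro a b d (hB | hB)
          · exact Or.inl (hScol _ _ _ hB)
          · simp at hB
        · convert hd using 1
          push_cast
          ring
        · simp only [nodeBelow]; omega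
  have hdisj : Disjoint F1 F2 := by
    rw [Finset.disjoint_left]
    rintro ⟨l', r', c'⟩ h1 h2
    rw [hF1] at h1
    rw [hF2] at h2
    omega
  have hc1 : (F1.card : ℤ) = if (e : ℤ) ∣ ((c : ℤ) + 1) then 1 else 0 := by
    simp only [F1]
    split_ifs <;> simp
  have hc2 : (F2.card : ℤ) = ∑ m ∈ Finset.Ioo l ℓ,
      if (e : ℤ) ∣ κ l - (r : ℤ) + (c : ℤ) - κ m then 1 else 0 := by
    simp only [F2]
    rw [Finset.card_image_of_injective _ (fun a b h => by simpa using h),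
      Finset.card_filter]
    push_cast
    rfl
  unfold dNode
  rw [hRem, hAdd, Set.ncard_coe_finset, Finset.card_union_of_disjoint hdisj]
  push_cast
  rw [hc1, hc2]
  simp

lemma degE_eq {ℓ n e : ℕ} (he : 2 ≤ e) (κ : ℕ → ℤ) (T : StdTableau ℓ n)
    (hT : T.entry = tlamEntry T.shape) :
    degE e κ T = ∑ l ∈ Finset.range ℓ, ∑ r ∈ Finset.range n,
      ∑ c ∈ Finset.range (T.shape.part l r),
      ((if (e : ℤ) ∣ ((c : ℤ) + 1) then 1 else 0) +
        ∑ m ∈ Finset.Ioo l ℓ,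
          if (e : ℤ) ∣ κ l - (r : ℤ) + (c : ℤ) - κ m then 1 else 0) := by
  have hfin : T.shape.diagram.Finite := T.bijOn.finite_iff_finite.2 (Set.finite_Icc 1 n)
  have hrhs : ∀ f : Node → ℤ, ∑ l ∈ Finset.range ℓ, ∑ r ∈ Finset.range n,
      ∑ c ∈ Finset.range (T.shape.part l r), f (l, r, c) = ∑ A ∈ hfin.toFinset, f A := by
    intro f
    simp only [Finset.sum_sigma']
    refine Finset.sum_nbij' (fun x => (x.1, x.2.1, x.2.2)) (fun A => ⟨A.1, A.2.1, A.2.2⟩)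
      ?_ ?_ ?_ ?_ ?_
    · rintro ⟨l, r, c⟩ h
      simp only [Finset.mem_sigma, Finset.mem_range] at h
      exact hfin.mem_toFinset.2 h.2.2
    · rintro ⟨l, r, c⟩ h
      have h' : (l, r, c) ∈ T.shape.diagram := by simpa using h
      have := row_lt _ h'
      simp only [Finset.mem_sigma, Finset.mem_range]
      exact ⟨this.1, this.2, h'⟩
    · rintro ⟨l, r, c⟩ h; rfl
    · rintro ⟨l, r, c⟩ h; rfl
    · rintro ⟨l, r, c⟩ h; rfl
  have := hrhs (fun A => (if (e : ℤ) ∣ ((A.2.2 : ℤ) + 1) then 1 else 0) +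
        ∑ m ∈ Finset.Ioo A.1 ℓ,
          if (e : ℤ) ∣ κ A.1 - (A.2.1 : ℤ) + (A.2.2 : ℤ) - κ m then 1 else 0)
  simp only at this
  rw [this]
  unfold degE
  symm
  refine Finset.sum_nbij T.entry ?_ ?_ ?_ ?_
  · intro A hA
    have := T.bijOn.mapsTo (hfin.mem_toFinset.1 hA)
    simpa using this
  · simpa using T.bijOn.injOn
  · simpa using T.bijOn.surjOn
  · rintro ⟨l, r, c⟩ hA
    have hA' := hfin.mem_toFinset.1 hA
    have hnode : T.node (T.entry (l, r, c)) = (l, r, c) :=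
      T.bijOn.injOn.leftInvOn_invFunOn hA'
    rw [hnode, hT]
    exact (dNode_eq he κ T.shape hfin l r c hA').symm

lemma kappa_gap {n ℓ : ℕ} {κ : ℕ → ℤ}
    (hκ : ∀ l, l + 1 < ℓ → (n : ℤ) < κ l - κ (l + 1)) (l m : ℕ) (hlm : l < m) (hm : m < ℓ) :
    (n : ℤ) < κ l - κ m := by
  induction m with
  | zero => omega
  | succ m ih =>
    have h := hκ m hm
    rcases Nat.lt_succ_iff_lt_or_eq.1 hlm with h1 | rfl
    · have := ih h1 (by omega)
      omega
    · exact h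

lemma part_le {ℓ n : ℕ} (μ : Multipartition ℓ n) (l r : ℕ) : μ.part l r ≤ n := by
  by_cases hl : l < ℓ
  · by_cases hr : r < n
    · calc μ.part l r ≤ ∑ r ∈ Finset.range n, μ.part l r :=
            Finset.single_le_sum (f := fun r => μ.part l r) (fun _ _ => Nat.zero_le _)
              (Finset.mem_range.2 hr)
        _ ≤ ∑ l ∈ Finset.range ℓ, ∑ r ∈ Finset.range n, μ.part l r :=
            Finset.single_le_sum (f := fun l => ∑ r ∈ Finset.range n, μ.part l r)
              (fun _ _ => Nat.zero_le _) (Finset.mem_range.2 hl)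
        _ = n := μ.size
    · rw [μ.row_bound _ _ (by omega)]; omega
  · rw [μ.comp_bound _ (by omega)]; omega

lemma prod_Icc_eq_range (f : ℤ → FF) (k : ℕ) :
    ∏ j ∈ Finset.Icc 1 k, f (j : ℤ) = ∏ c ∈ Finset.range k, f ((c : ℤ) + 1) := by
  induction k with
  | zero => simp
  | succ k ih =>
    rw [Finset.prod_Icc_succ_top (by omega), Finset.prod_range_succ, ih]
    push_cast
    rfl

/-- for a multicharge with `κ_l - κ_{l+1} > n` and `λ` an
`ℓ`-multipartition of `n`, the seminormal coefficient
`γ_{t^λ} = [λ]!_t ∏_{l<m} ∏_{(l,r,c) ∈ [λ]} [κ_l - r + c - κ_m]_t` of the Murphy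
basis equals `∏_{e ≥ 2} Φ_e(t)^{deg_e(t^λ)}` (an identity of elements of `ℤ[t]`,
stated in its fraction field). -/
theorem gamma_tlam_cyclotomic (n ℓ : ℕ) (hℓ : 1 ≤ ℓ) (κ : ℕ → ℤ)
    (hκ : ∀ l, l + 1 < ℓ → (n : ℤ) < κ l - κ (l + 1))
    (μ : Multipartition ℓ n) (T : StdTableau ℓ n)
    (hT1 : T.shape = μ) (hT2 : T.entry = tlamEntry μ) :
    (∏ l ∈ Finset.range ℓ, ∏ r ∈ Finset.range n, ∏ j ∈ Finset.Icc 1 (μ.part l r),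
        qint xF (j : ℤ)) *
      (∏ l ∈ Finset.range ℓ, ∏ m ∈ Finset.Ioo l ℓ, ∏ r ∈ Finset.range n,
        ∏ c ∈ Finset.range (μ.part l r), qint xF (κ l - (r : ℤ) + (c : ℤ) - κ m)) =
    ∏ᶠ (e : ℕ) (_ : 2 ≤ e),
      (algebraMap (Polynomial ℤ) FF (Polynomial.cyclotomic e ℤ)) ^ (degE e κ T) := by
  subst hT1
  set μ := T.shape with hμ
  -- a bound for all quantum integers occurring
  let N : ℕ := n + ∑ l ∈ Finset.range ℓ, ∑ m ∈ Finset.range ℓ, (κ l - κ m).natAbs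
  have hNn : n ≤ N := Nat.le_add_right _ _
  have hNκ : ∀ l m, l < ℓ → m < ℓ → κ l - κ m + n ≤ N := by
    intro l m hl hm
    have h1 : (κ l - κ m).natAbs ≤ ∑ m ∈ Finset.range ℓ, (κ l - κ m).natAbs :=
      Finset.single_le_sum (f := fun m => (κ l - κ m).natAbs) (fun _ _ => Nat.zero_le _)
        (Finset.mem_range.2 hm)
    have h2 : ∑ m ∈ Finset.range ℓ, (κ l - κ m).natAbs ≤
        ∑ l ∈ Finset.range ℓ, ∑ m ∈ Finset.range ℓ, (κ l - κ m).natAbs :=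
      Finset.single_le_sum (f := fun l => ∑ m ∈ Finset.range ℓ, (κ l - κ m).natAbs)
        (fun _ _ => Nat.zero_le _) (Finset.mem_range.2 hl)
    have h3 : (κ l - κ m).natAbs + n ≤ N := by
      simp only [N]
      omega
    omega
  have hcyc : ∀ e : ℕ, algebraMap (Polynomial ℤ) FF (Polynomial.cyclotomic e ℤ) ≠ 0 := by
    intro e h
    exact Polynomial.cyclotomic_ne_zero e ℤ
      ((map_eq_zero_iff _ (IsFractionRing.injective (Polynomial ℤ) FF)).1 h)
  have b1 : ∀ l r c, c < μ.part l r → 0 < (c : ℤ) + 1 ∧ (c : ℤ) + 1 ≤ N := by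
    intro l r c hc
    have := part_le μ l r
    omega
  have b2 : ∀ l m r c, l < m → m < ℓ → c < μ.part l r →
      0 < κ l - (r : ℤ) + c - κ m ∧ κ l - (r : ℤ) + c - κ m ≤ N := by
    intro l m r c hlm hm hc
    have h1 := part_le μ l r
    have h2 := kappa_gap hκ l m hlm hm
    have h3 := hNκ l m (by omega) hm
    have h4 := (row_lt μ (A := (l, r, c)) hc).2
    simp only at h4
    omega
  -- the right-hand side is a finite product
  have hR : (∏ᶠ (e : ℕ) (_ : 2 ≤ e),
      (algebraMap (Polynomial ℤ) FF (Polynomial.cyclotomic e ℤ)) ^ (degE e κ T)) =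
      ∏ e ∈ Finset.Icc 2 N,
        (algebraMap (Polynomial ℤ) FF (Polynomial.cyclotomic e ℤ)) ^ (degE e κ T) := by
    have hcond : ∀ e : ℕ, (∏ᶠ (_ : 2 ≤ e),
        (algebraMap (Polynomial ℤ) FF (Polynomial.cyclotomic e ℤ)) ^ (degE e κ T)) =
        if 2 ≤ e then
          (algebraMap (Polynomial ℤ) FF (Polynomial.cyclotomic e ℤ)) ^ (degE e κ T) else 1 :=
      fun e => finprod_eq_if
    simp only [hcond]
    rw [finprod_eq_prod_of_mulSupport_subset (s := Finset.Icc 2 N)]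
    · refine Finset.prod_congr rfl fun e he => ?_
      rw [if_pos (Finset.mem_Icc.1 he).1]
    · intro e he
      rw [Function.mem_mulSupport] at he
      rw [Finset.coe_Icc, Set.mem_Icc]
      by_contra hne
      apply he
      split_ifs with h2
      · have hNe : N < e := by
          by_contra h
          exact hne ⟨h2, by omega⟩
        have h0 : degE e κ T = 0 := by
          rw [degE_eq h2 κ T hT2]
          refine Finset.sum_eq_zero fun l _ => Finset.sum_eq_zero fun r _ =>
            Finset.sum_eq_zero fun c hc => ?_
          have hc' := Finset.mem_range.1 hc
          have hnd : ∀ d : ℤ, 0 < d ∧ d ≤ N → ¬ (e : ℤ) ∣ d := by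
            rintro d ⟨hd, hdN⟩ hdv
            have := Int.le_of_dvd hd hdv
            omega
          rw [if_neg (hnd _ (b1 l r c hc')), zero_add]
          refine Finset.sum_eq_zero fun m hm => ?_
          obtain ⟨hm1, hm2⟩ := Finset.mem_Ioo.1 hm
          rw [if_neg (hnd _ (b2 l m r c hm1 hm2 hc'))]
        rw [h0, zpow_zero]
      · rfl
  rw [hR]
  have hsumpow : ∀ (a : FF), a ≠ 0 → ∀ (s : Finset ℕ) (f : ℕ → ℤ),
      a ^ (∑ i ∈ s, f i) = ∏ i ∈ s, a ^ f i := by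
    intro a ha s f
    induction s using Finset.induction_on with
    | empty => simp
    | insert i s hi ih => rw [Finset.sum_insert hi, Finset.prod_insert hi, zpow_add₀ ha, ih]
  have hE : ∀ e ∈ Finset.Icc 2 N,
      (algebraMap (Polynomial ℤ) FF (Polynomial.cyclotomic e ℤ)) ^ (degE e κ T) =
      ∏ l ∈ Finset.range ℓ, ∏ r ∈ Finset.range n, ∏ c ∈ Finset.range (μ.part l r),
        ((algebraMap (Polynomial ℤ) FF (Polynomial.cyclotomic e ℤ)) ^
            (if (e : ℤ) ∣ ((c : ℤ) + 1) then (1 : ℤ) else 0) *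
          ∏ m ∈ Finset.Ioo l ℓ,
            (algebraMap (Polynomial ℤ) FF (Polynomial.cyclotomic e ℤ)) ^
              (if (e : ℤ) ∣ κ l - (r : ℤ) + (c : ℤ) - κ m then (1 : ℤ) else 0)) := by
    intro e he
    rw [degE_eq (Finset.mem_Icc.1 he).1 κ T hT2]
    simp only [hsumpow _ (hcyc e), zpow_add₀ (hcyc e)]
    rfl
  rw [Finset.prod_congr rfl hE, Finset.prod_comm (s := Finset.Icc 2 N), ← Finset.prod_mul_distrib]
  refine Finset.prod_congr rfl fun l hl => ?_
  rw [Finset.prod_comm (s := Finset.Icc 2 N), Finset.prod_comm (s := Finset.Ioo l ℓ),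
    ← Finset.prod_mul_distrib]
  refine Finset.prod_congr rfl fun r hr => ?_
  rw [Finset.prod_comm (s := Finset.Icc 2 N), Finset.prod_comm (s := Finset.Ioo l ℓ),
    prod_Icc_eq_range, ← Finset.prod_mul_distrib]
  refine Finset.prod_congr rfl fun c hc => ?_
  have hc' := Finset.mem_range.1 hc
  rw [Finset.prod_mul_distrib, Finset.prod_comm (s := Finset.Icc 2 N)]
  congr 1
  · exact qint_eq_prod N _ (b1 l r c hc').1 (b1 l r c hc').2
  · refine Finset.prod_congr rfl fun m hm => ?_
    obtain ⟨hm1, hm2⟩ := Finset.mem_Ioo.1 hm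
    have := b2 l m r c hm1 hm2 hc'
    exact qint_eq_prod N _ this.1 this.2

end Paper
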